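/- For every randomized policy π, the distributionally robust return estimate lower-bounds the true return: ρ̃(π) ≤ ρ(π); equivalently, for every v ∈ Ṽ, αᵀv − sup_{u∈Ũ(π)} uᵀ(Av − b)/(1−γ) ≤ ρ(π). Moreover, if Φ is the identity matrix on ℝ^S and π is deterministic, then Ũ(π) = {u_π} and ρ̃(π) = ρ(π). -/

import Mathlib

open Matrix BigOperators

namespace DRADP

variable {S A K : Type*} [Fintype S] [Fintype A] [Fintype K] [DecidableEq S] [DecidableEq A]

/-- A randomized policy: nonnegative with rows summing to one. -/
def isPolicy (π : S → A → ℝ) : Prop :=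
  (∀ s a, 0 ≤ π s a) ∧ ∀ s, ∑ a, π s a = 1

/-- The randomized policy corresponding to a deterministic policy `p : S → A`. -/
def detPol (p : S → A) : S → A → ℝ := fun s a => if a = p s then 1 else 0

/-- Transition matrix `P_π` of a policy. -/
noncomputable def Pmat (P : S → A → S → ℝ) (π : S → A → ℝ) : Matrix S S ℝ :=
  Matrix.of fun s s' => ∑ a, P s a s' * π s a

/-- Reward vector `r_π` of a policy. -/
noncomputable def rvec (r : S → A → ℝ) (π : S → A → ℝ) : S → ℝ :=
  fun s => ∑ a, r s a * π s a

/-- State occupancy frequency `d_π = (1-γ)·∑_t γ^t (P_πᵀ)^t α`. -/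
noncomputable def dOcc (P : S → A → S → ℝ) (α : S → ℝ) (γ : ℝ) (π : S → A → ℝ) : S → ℝ :=
  fun s => (1 - γ) * ∑' t : ℕ, γ ^ t * (((Pmat P π)ᵀ ^ t) *ᵥ α) s

/-- State-action occupancy frequency `u_π(s,a) = d_π(s)·π(s,a)`. -/
noncomputable def uOcc (P : S → A → S → ℝ) (α : S → ℝ) (γ : ℝ) (π : S → A → ℝ) : S × A → ℝ :=
  fun w => dOcc P α γ π w.1 * π w.1 w.2

/-- Value function `v_π = ∑_t γ^t P_π^t r_π`. -/
noncomputable def vVal (P : S → A → S → ℝ) (r : S → A → ℝ) (γ : ℝ) (π : S → A → ℝ) : S → ℝ :=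
  fun s => ∑' t : ℕ, γ ^ t * ((Pmat P π ^ t) *ᵥ rvec r π) s

/-- The return `ρ(π) = αᵀ v_π`. -/
noncomputable def ret (P : S → A → S → ℝ) (r : S → A → ℝ) (α : S → ℝ) (γ : ℝ)
    (π : S → A → ℝ) : ℝ :=
  ∑ s, α s * vVal P r γ π s

/-- The matrix `A` with rows `A((s,a),·) = e_sᵀ − γ·P(s,a,·)`. -/
def Amat (P : S → A → S → ℝ) (γ : ℝ) : Matrix (S × A) S ℝ :=
  Matrix.of fun w s' => (if w.1 = s' then (1 : ℝ) else 0) - γ * P w.1 w.2 s'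

/-- The vector `b(s,a) = r(s,a)`. -/
def bvec (r : S → A → ℝ) : S × A → ℝ := fun w => r w.1 w.2

/-- `U = {u : u ≥ 0, Aᵀu = (1−γ)·α}`. -/
def Uset (P : S → A → S → ℝ) (α : S → ℝ) (γ : ℝ) : Set (S × A → ℝ) :=
  {u | (∀ w, 0 ≤ u w) ∧ (Amat P γ)ᵀ *ᵥ u = fun s => (1 - γ) * α s}

/-- The Bellman operator `L`. -/
noncomputable def bell (P : S → A → S → ℝ) (r : S → A → ℝ) (γ : ℝ) (v : S → ℝ) : S → ℝ :=
  fun s => ⨆ a : A, (r s a + γ * ∑ s', P s a s' * v s')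

/-- A deterministic policy `p` is greedy w.r.t. `v`. -/
def isGreedy (P : S → A → S → ℝ) (r : S → A → ℝ) (γ : ℝ) (p : S → A) (v : S → ℝ) : Prop :=
  ∀ s a, r s a + γ * ∑ s', P s a s' * v s' ≤ r s (p s) + γ * ∑ s', P s (p s) s' * v s'

/-- Approximate occupancy frequencies `Ũ(π)`. -/
def Utilde (P : S → A → S → ℝ) (α : S → ℝ) (γ : ℝ) (Φ : Matrix S K ℝ) (π : S → A → ℝ) :
    Set (S × A → ℝ) :=
  {u | (∀ w, 0 ≤ u w) ∧
    (Φᵀ *ᵥ ((Amat P γ)ᵀ *ᵥ u) = fun j => (1 - γ) * (Φᵀ *ᵥ α) j) ∧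
    ∀ w, u w ≤ π w.1 w.2}

/-- The distributionally robust return estimate
`ρ̃(π) = sup_{v∈Ṽ} (αᵀv − sup_{u∈Ũ(π)} uᵀ(Av − b)/(1−γ))`. -/
noncomputable def rhoTilde (P : S → A → S → ℝ) (r : S → A → ℝ) (α : S → ℝ) (γ : ℝ)
    (Φ : Matrix S K ℝ) (π : S → A → ℝ) : ℝ :=
  ⨆ x : K → ℝ, (∑ s, α s * (Φ *ᵥ x) s -
    sSup ((fun u : S × A → ℝ =>
      (∑ w, u w * ((Amat P γ *ᵥ (Φ *ᵥ x)) w - bvec r w)) / (1 - γ)) ''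
      Utilde P α γ Φ π))

/-- The set `G` of deterministic policies greedy w.r.t. some representable value function. -/
def greedySet (P : S → A → S → ℝ) (r : S → A → ℝ) (γ : ℝ) (Φ : Matrix S K ℝ) :
    Set (S → A → ℝ) :=
  {π | ∃ p : S → A, π = detPol p ∧ ∃ x : K → ℝ, isGreedy P r γ p (Φ *ᵥ x)}

end DRADP

open DRADP

/-!
Write `M = P_π`. Since `M` is row-stochastic, `(1 - γ M)⁻¹ = ∑ γ^t M^t`, so that
`v_π = (1 - γ M)⁻¹ r_π` and `d_π = (1 - γ) αᵀ(1 - γ M)⁻¹`; associativity of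
`αᵀ (1 - γ M)⁻¹ r_π` gives `u_πᵀ b = (1 - γ) ρ(π)`. As `Aᵀ u_π = (1 - γ) α`, the inner objective
takes at `u_π` the value `αᵀ v - ρ(π)` for every `v`, and `u_π ∈ Ũ(π)` turns this into the lower
bound. For a deterministic policy and `Φ = 1`, a point of `Ũ(π)` is determined by its state
marginal `d`, for which `dᵀ(1 - γ M) = (1 - γ) αᵀ`; invertibility of `1 - γ M` leaves only `d_π`.
-/

namespace DRADP

section Resolvent

open scoped Matrix.Norms.Operator

variable {n : Type*} [Fintype n] [DecidableEq n] {M : Matrix n n ℝ} {γ : ℝ}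

lemma norm_le_one_of_mem_rowStochastic (hM : M ∈ rowStochastic ℝ n) : ‖M‖ ≤ 1 := by
  rw [linfty_opNorm_def, ← NNReal.coe_one, NNReal.coe_le_coe]
  refine Finset.sup_le fun i _ => NNReal.coe_le_coe.1 ?_
  simp [abs_of_nonneg (nonneg_of_mem_rowStochastic hM), sum_row_of_mem_rowStochastic hM]

lemma norm_smul_lt_one_of_mem_rowStochastic (hM : M ∈ rowStochastic ℝ n) (hγ : |γ| < 1) :
    ‖γ • M‖ < 1 := by
  rw [norm_smul, Real.norm_eq_abs]
  exact (mul_le_of_le_one_right (abs_nonneg γ) (norm_le_one_of_mem_rowStochastic hM)).trans_lt hγ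

lemma isUnit_one_sub_smul (hM : M ∈ rowStochastic ℝ n) (hγ : |γ| < 1) : IsUnit (1 - γ • M) :=
  isUnit_one_sub_of_norm_lt_one (norm_smul_lt_one_of_mem_rowStochastic hM hγ)

lemma hasSum_pow_smul_pow (hM : M ∈ rowStochastic ℝ n) (hγ : |γ| < 1) :
    HasSum (fun t : ℕ => γ ^ t • M ^ t) (1 - γ • M)⁻¹ := by
  simp_rw [← smul_pow, nonsing_inv_eq_ringInverse]
  exact hasSum_geom_series_inverse _ (norm_smul_lt_one_of_mem_rowStochastic hM hγ)

lemma tsum_pow_mul_pow_mulVec {R : Matrix n n ℝ} (hR : HasSum (fun t : ℕ => γ ^ t • M ^ t) R)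
    (x : n → ℝ) (i : n) : ∑' t : ℕ, γ ^ t * ((M ^ t) *ᵥ x) i = (R *ᵥ x) i := by
  have hRx : HasSum (fun t : ℕ => (γ ^ t • M ^ t) *ᵥ x) (R *ᵥ x) :=
    hR.map (mulVec.addMonoidHomLeft x) (continuous_id.matrix_mulVec continuous_const)
  simpa only [smul_mulVec, Pi.smul_apply, smul_eq_mul] using (Pi.hasSum.1 hRx i).tsum_eq

lemma smul_inv_one_sub_smul_mem_rowStochastic (hM : M ∈ rowStochastic ℝ n) (hγ0 : 0 ≤ γ)
    (hγ1 : γ < 1) : (1 - γ) • (1 - γ • M)⁻¹ ∈ rowStochastic ℝ n := by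
  have hγ : |γ| < 1 := (abs_of_nonneg hγ0).trans_lt hγ1
  refine mem_rowStochastic.2 ⟨fun i j => mul_nonneg (sub_nonneg.2 hγ1.le) ?_, ?_⟩
  · have hij := Pi.hasSum.1 (Pi.hasSum.1 (hasSum_pow_smul_pow hM hγ) i) j
    exact hij.nonneg fun t =>
      mul_nonneg (pow_nonneg hγ0 t) (nonneg_of_mem_rowStochastic (pow_mem hM t))
  · have hone : (1 - γ • M) *ᵥ 1 = (1 - γ) • (1 : n → ℝ) := by
      rw [sub_mulVec, one_mulVec, smul_mulVec, hM.2, sub_smul, one_smul]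
    rw [smul_mulVec, ← mulVec_smul, ← hone, mulVec_mulVec,
      nonsing_inv_mul _ ((isUnit_iff_isUnit_det _).1 (isUnit_one_sub_smul hM hγ)), one_mulVec]

lemma vecMul_mem_stdSimplex (hM : M ∈ rowStochastic ℝ n) {x : n → ℝ} (hx : x ∈ stdSimplex ℝ n) :
    x ᵥ* M ∈ stdSimplex ℝ n := by
  refine ⟨nonneg_vecMul_of_mem_rowStochastic hM hx.1, ?_⟩
  simpa only [dotProduct_one] using
    vecMul_dotProduct_one_eq_one_rowStochastic hM ((dotProduct_one x).trans hx.2)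

end Resolvent

section Policy

variable {S A : Type*} [Fintype A] {P : S → A → S → ℝ} {π : S → A → ℝ}

lemma Pmat_mem_rowStochastic [Fintype S] [DecidableEq S] (hP : ∀ s a s', 0 ≤ P s a s')
    (hPsum : ∀ s a, ∑ s', P s a s' = 1) (hπ : isPolicy π) : Pmat P π ∈ rowStochastic ℝ S := by
  refine mem_rowStochastic_iff_sum.2
    ⟨fun s s' => Finset.sum_nonneg fun a _ => mul_nonneg (hP s a s') (hπ.1 s a), fun s => ?_⟩
  simp only [Pmat, of_apply]
  rw [Finset.sum_comm]
  simp only [← Finset.sum_mul, hPsum, one_mul, hπ.2]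

lemma isPolicy_detPol [DecidableEq A] (p : S → A) : isPolicy (detPol p) :=
  ⟨fun s a => by unfold detPol; positivity, fun s => by simp [detPol]⟩

lemma sum_mul_Amat [DecidableEq S] (hπ : ∀ s, ∑ a, π s a = 1) (P : S → A → S → ℝ) (γ : ℝ)
    (s s' : S) : ∑ a, π s a * Amat P γ (s, a) s' = (1 - γ • Pmat P π) s s' := by
  simp only [Amat, Pmat, of_apply, Matrix.sub_apply, Matrix.smul_apply, one_apply, smul_eq_mul,
    mul_sub, Finset.sum_sub_distrib, Finset.mul_sum]
  congr 1
  · by_cases hs : s = s' <;> simp [hs, hπ]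
  · exact Finset.sum_congr rfl fun a _ => by ring

end Policy

section StateActionFreq

variable {S A : Type*}

/-- The state-action frequency `u(s,a) = d(s)·π(s,a)` with state marginal `d` in which actions are
drawn from `π`; the occupancy frequency `u_π` is the case `d = d_π`. -/
def stateActionFreq (d : S → ℝ) (π : S → A → ℝ) : S × A → ℝ := fun w => d w.1 * π w.1 w.2

lemma eq_stateActionFreq_of_le_detPol [DecidableEq A] {p : S → A} {u : S × A → ℝ}
    (hu0 : ∀ w, 0 ≤ u w) (hu : ∀ w, u w ≤ detPol p w.1 w.2) :
    u = stateActionFreq (fun s => u (s, p s)) (detPol p) := by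
  ext ⟨s, a⟩
  by_cases ha : a = p s
  · simp [stateActionFreq, detPol, ha]
  · have hle : u (s, a) ≤ 0 := by simpa [detPol, ha] using hu (s, a)
    simpa [stateActionFreq, detPol, ha] using le_antisymm hle (hu0 (s, a))

variable [Fintype S] [Fintype A]

lemma stateActionFreq_dotProduct_bvec (d : S → ℝ) (π : S → A → ℝ) (r : S → A → ℝ) :
    stateActionFreq d π ⬝ᵥ bvec r = d ⬝ᵥ rvec r π := by
  simp only [dotProduct, stateActionFreq, bvec, rvec, Fintype.sum_prod_type, Finset.mul_sum,
    mul_assoc, mul_comm (r _ _)]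

lemma stateActionFreq_vecMul_Amat [DecidableEq S] {π : S → A → ℝ} (hπ : ∀ s, ∑ a, π s a = 1)
    (d : S → ℝ) (P : S → A → S → ℝ) (γ : ℝ) :
    stateActionFreq d π ᵥ* Amat P γ = d ᵥ* (1 - γ • Pmat P π) := by
  ext s'
  simp only [vecMul, dotProduct, stateActionFreq, Fintype.sum_prod_type, mul_assoc,
    ← Finset.mul_sum, sum_mul_Amat hπ]

end StateActionFreq

section Occupancy

variable {S A : Type*} [Fintype S] [Fintype A] [DecidableEq S]
  {P : S → A → S → ℝ} {r : S → A → ℝ} {α : S → ℝ} {γ : ℝ} {π : S → A → ℝ}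

lemma vVal_eq_inv_mulVec (hM : Pmat P π ∈ rowStochastic ℝ S) (hγ : |γ| < 1) :
    vVal P r γ π = (1 - γ • Pmat P π)⁻¹ *ᵥ rvec r π :=
  funext (tsum_pow_mul_pow_mulVec (hasSum_pow_smul_pow hM hγ) _)

lemma dOcc_eq_smul_vecMul_inv (hM : Pmat P π ∈ rowStochastic ℝ S) (hγ : |γ| < 1) :
    dOcc P α γ π = ((1 - γ) • α) ᵥ* (1 - γ • Pmat P π)⁻¹ := by
  have hMT : HasSum (fun t : ℕ => γ ^ t • (Pmat P π)ᵀ ^ t) ((1 - γ • Pmat P π)⁻¹)ᵀ := by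
    simpa only [transpose_smul, transpose_pow] using (hasSum_pow_smul_pow hM hγ).matrix_transpose
  ext s
  simp only [dOcc, tsum_pow_mul_pow_mulVec hMT, mulVec_transpose, smul_vecMul, Pi.smul_apply,
    smul_eq_mul]

lemma vecMul_one_sub_smul_Pmat_eq_iff (hM : Pmat P π ∈ rowStochastic ℝ S) (hγ : |γ| < 1)
    {d : S → ℝ} : d ᵥ* (1 - γ • Pmat P π) = (1 - γ) • α ↔ d = dOcc P α γ π := by
  have hdet := (isUnit_iff_isUnit_det _).1 (isUnit_one_sub_smul hM hγ)
  rw [dOcc_eq_smul_vecMul_inv hM hγ]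
  constructor
  · intro hd
    rw [← hd, vecMul_vecMul, mul_nonsing_inv _ hdet, vecMul_one]
  · rintro rfl
    rw [vecMul_vecMul, nonsing_inv_mul _ hdet, vecMul_one]

lemma dOcc_nonneg (hM : Pmat P π ∈ rowStochastic ℝ S) (hα : ∀ s, 0 ≤ α s) (hγ0 : 0 ≤ γ)
    (hγ1 : γ < 1) : ∀ s, 0 ≤ dOcc P α γ π s := by
  rw [dOcc_eq_smul_vecMul_inv hM ((abs_of_nonneg hγ0).trans_lt hγ1), smul_vecMul, ← vecMul_smul]
  exact nonneg_vecMul_of_mem_rowStochastic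
    (smul_inv_one_sub_smul_mem_rowStochastic hM hγ0 hγ1) hα

lemma dOcc_mem_stdSimplex (hM : Pmat P π ∈ rowStochastic ℝ S) (hα : α ∈ stdSimplex ℝ S)
    (hγ0 : 0 ≤ γ) (hγ1 : γ < 1) : dOcc P α γ π ∈ stdSimplex ℝ S := by
  rw [dOcc_eq_smul_vecMul_inv hM ((abs_of_nonneg hγ0).trans_lt hγ1), smul_vecMul, ← vecMul_smul]
  exact vecMul_mem_stdSimplex (smul_inv_one_sub_smul_mem_rowStochastic hM hγ0 hγ1) hα

lemma dOcc_dotProduct_rvec (hM : Pmat P π ∈ rowStochastic ℝ S) (hγ : |γ| < 1) :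
    dOcc P α γ π ⬝ᵥ rvec r π = (1 - γ) * ret P r α γ π := by
  rw [dOcc_eq_smul_vecMul_inv hM hγ, ← dotProduct_mulVec, ← vVal_eq_inv_mulVec hM hγ,
    smul_dotProduct]
  rfl

lemma uOcc_vecMul_Amat (hM : Pmat P π ∈ rowStochastic ℝ S) (hπ : ∀ s, ∑ a, π s a = 1)
    (hγ : |γ| < 1) : uOcc P α γ π ᵥ* Amat P γ = (1 - γ) • α :=
  (stateActionFreq_vecMul_Amat hπ _ P γ).trans ((vecMul_one_sub_smul_Pmat_eq_iff hM hγ).2 rfl)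

lemma uOcc_mem_Uset (hM : Pmat P π ∈ rowStochastic ℝ S) (hα : ∀ s, 0 ≤ α s)
    (hγ0 : 0 ≤ γ) (hγ1 : γ < 1) (hπ : isPolicy π) : uOcc P α γ π ∈ Uset P α γ := by
  refine ⟨fun w => mul_nonneg (dOcc_nonneg hM hα hγ0 hγ1 w.1) (hπ.1 _ _), ?_⟩
  rw [mulVec_transpose, uOcc_vecMul_Amat hM hπ.2 ((abs_of_nonneg hγ0).trans_lt hγ1)]
  rfl

lemma uOcc_le (hM : Pmat P π ∈ rowStochastic ℝ S) (hα : α ∈ stdSimplex ℝ S)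
    (hγ0 : 0 ≤ γ) (hγ1 : γ < 1) (hπ : ∀ s a, 0 ≤ π s a) (w : S × A) :
    uOcc P α γ π w ≤ π w.1 w.2 :=
  mul_le_of_le_one_left (hπ _ _)
    (mem_Icc_of_mem_stdSimplex (dOcc_mem_stdSimplex hM hα hγ0 hγ1) w.1).2

lemma eq_uOcc_of_mem_Uset_of_le_detPol [DecidableEq A] {p : S → A} {u : S × A → ℝ}
    (hM : Pmat P (detPol p) ∈ rowStochastic ℝ S) (hγ : |γ| < 1)
    (hu : u ∈ Uset P α γ) (hup : ∀ w, u w ≤ detPol p w.1 w.2) : u = uOcc P α γ (detPol p) := by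
  have hfreq := eq_stateActionFreq_of_le_detPol hu.1 hup
  have hflow : u ᵥ* Amat P γ = (1 - γ) • α := (mulVec_transpose _ _).symm.trans hu.2
  rw [hfreq, stateActionFreq_vecMul_Amat (isPolicy_detPol p).2,
    vecMul_one_sub_smul_Pmat_eq_iff hM hγ] at hflow
  rw [hfreq, hflow]
  rfl

end Occupancy

section Utilde

variable {S A K : Type*} [Fintype S] [Fintype A] [DecidableEq S]
  {P : S → A → S → ℝ} {α : S → ℝ} {γ : ℝ} {π : S → A → ℝ}

lemma mem_Utilde_of_mem_Uset {Φ : Matrix S K ℝ} {u : S × A → ℝ} (hu : u ∈ Uset P α γ)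
    (huπ : ∀ w, u w ≤ π w.1 w.2) : u ∈ Utilde P α γ Φ π :=
  ⟨hu.1, by rw [hu.2]; exact mulVec_smul Φᵀ (1 - γ) α, huπ⟩

lemma mem_Utilde_one_iff {u : S × A → ℝ} :
    u ∈ Utilde P α γ (1 : Matrix S S ℝ) π ↔ u ∈ Uset P α γ ∧ ∀ w, u w ≤ π w.1 w.2 := by
  simp only [Utilde, Uset, Set.mem_ofPred_eq, transpose_one, one_mulVec, and_assoc]

lemma uOcc_mem_Utilde (hM : Pmat P π ∈ rowStochastic ℝ S) (hα : α ∈ stdSimplex ℝ S)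
    (hγ0 : 0 ≤ γ) (hγ1 : γ < 1) (hπ : isPolicy π) (Φ : Matrix S K ℝ) :
    uOcc P α γ π ∈ Utilde P α γ Φ π :=
  mem_Utilde_of_mem_Uset (uOcc_mem_Uset hM hα.1 hγ0 hγ1 hπ) (uOcc_le hM hα hγ0 hγ1 hπ.1)

lemma Utilde_one_detPol [DecidableEq A] {p : S → A} (hM : Pmat P (detPol p) ∈ rowStochastic ℝ S)
    (hα : α ∈ stdSimplex ℝ S) (hγ0 : 0 ≤ γ) (hγ1 : γ < 1) :
    Utilde P α γ (1 : Matrix S S ℝ) (detPol p) = {uOcc P α γ (detPol p)} := by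
  refine Set.eq_singleton_iff_unique_mem.2
    ⟨uOcc_mem_Utilde hM hα hγ0 hγ1 (isPolicy_detPol p) 1, fun u hu => ?_⟩
  obtain ⟨huU, hup⟩ := mem_Utilde_one_iff.1 hu
  exact eq_uOcc_of_mem_Uset_of_le_detPol hM ((abs_of_nonneg hγ0).trans_lt hγ1) huU hup

end Utilde

section MeanResidual

variable {S A K : Type*} [Fintype S] [Fintype A] [DecidableEq S]
  {P : S → A → S → ℝ} {r : S → A → ℝ} {α : S → ℝ} {γ : ℝ} {π : S → A → ℝ}

/-- The normalized mean Bellman residual `uᵀ(Av − b)/(1−γ)` of `v` under the frequencies `u`,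
which is the objective of the inner supremum in `ρ̃`. -/
noncomputable def meanResidual (P : S → A → S → ℝ) (r : S → A → ℝ) (γ : ℝ) (v : S → ℝ)
    (u : S × A → ℝ) : ℝ :=
  u ⬝ᵥ (Amat P γ *ᵥ v - bvec r) / (1 - γ)

lemma bddAbove_meanResidual_image_Utilde (Φ : Matrix S K ℝ) (v : S → ℝ) :
    BddAbove (meanResidual P r γ v '' Utilde P α γ Φ π) := by
  have hcont : Continuous (meanResidual P r γ v) :=
    (continuous_id.dotProduct continuous_const).div_const _
  have hsub : Utilde P α γ Φ π ⊆ Set.Icc 0 (fun w => π w.1 w.2) := fun u hu => ⟨hu.1, hu.2.2⟩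
  exact (isCompact_Icc.bddAbove_image hcont.continuousOn).mono (Set.image_mono hsub)

lemma meanResidual_uOcc (hM : Pmat P π ∈ rowStochastic ℝ S) (hπ : ∀ s, ∑ a, π s a = 1)
    (hγ : |γ| < 1) (v : S → ℝ) :
    meanResidual P r γ v (uOcc P α γ π) = α ⬝ᵥ v - ret P r α γ π := by
  have hne : 1 - γ ≠ 0 := sub_ne_zero.2 (abs_lt.1 hγ).2.ne'
  have hAv : uOcc P α γ π ⬝ᵥ (Amat P γ *ᵥ v) = (1 - γ) * (α ⬝ᵥ v) := by
    rw [dotProduct_mulVec, uOcc_vecMul_Amat hM hπ hγ, smul_dotProduct, smul_eq_mul]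
  have hb : uOcc P α γ π ⬝ᵥ bvec r = (1 - γ) * ret P r α γ π :=
    (stateActionFreq_dotProduct_bvec _ π r).trans (dOcc_dotProduct_rvec hM hγ)
  rw [meanResidual, dotProduct_sub, hAv, hb, ← mul_sub, mul_div_cancel_left₀ _ hne]

lemma dotProduct_sub_sSup_meanResidual_le_ret (hM : Pmat P π ∈ rowStochastic ℝ S)
    (hα : α ∈ stdSimplex ℝ S) (hγ0 : 0 ≤ γ) (hγ1 : γ < 1) (hπ : isPolicy π)
    (Φ : Matrix S K ℝ) (v : S → ℝ) :
    α ⬝ᵥ v - sSup (meanResidual P r γ v '' Utilde P α γ Φ π) ≤ ret P r α γ π := by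
  have hle := le_csSup (bddAbove_meanResidual_image_Utilde (r := r) Φ v)
    (Set.mem_image_of_mem _ (uOcc_mem_Utilde hM hα hγ0 hγ1 hπ Φ))
  rw [meanResidual_uOcc hM hπ.2 ((abs_of_nonneg hγ0).trans_lt hγ1)] at hle
  linarith

end MeanResidual

section RhoTilde

variable {S A : Type*} [Fintype S] [Fintype A] [DecidableEq S] {P : S → A → S → ℝ}
  {r : S → A → ℝ} {α : S → ℝ} {γ : ℝ}

lemma rhoTilde_eq_iSup {K : Type*} [Fintype K] (Φ : Matrix S K ℝ) (π : S → A → ℝ) :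
    rhoTilde P r α γ Φ π = ⨆ x : K → ℝ,
      (α ⬝ᵥ (Φ *ᵥ x) - sSup (meanResidual P r γ (Φ *ᵥ x) '' Utilde P α γ Φ π)) := rfl

lemma rhoTilde_le_ret {K : Type*} [Fintype K] {π : S → A → ℝ} (hM : Pmat P π ∈ rowStochastic ℝ S)
    (hα : α ∈ stdSimplex ℝ S) (hγ0 : 0 ≤ γ) (hγ1 : γ < 1) (hπ : isPolicy π) (Φ : Matrix S K ℝ) :
    rhoTilde P r α γ Φ π ≤ ret P r α γ π :=
  (rhoTilde_eq_iSup Φ π).trans_le <| ciSup_le fun x =>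
    dotProduct_sub_sSup_meanResidual_le_ret hM hα hγ0 hγ1 hπ Φ (Φ *ᵥ x)

lemma rhoTilde_one_detPol [DecidableEq A] {p : S → A}
    (hM : Pmat P (detPol p) ∈ rowStochastic ℝ S) (hα : α ∈ stdSimplex ℝ S) (hγ0 : 0 ≤ γ)
    (hγ1 : γ < 1) : rhoTilde P r α γ (1 : Matrix S S ℝ) (detPol p) = ret P r α γ (detPol p) := by
  simp only [rhoTilde_eq_iSup, Utilde_one_detPol hM hα hγ0 hγ1, Set.image_singleton,
    csSup_singleton,
    meanResidual_uOcc hM (isPolicy_detPol p).2 ((abs_of_nonneg hγ0).trans_lt hγ1),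
    sub_sub_cancel, ciSup_const]

end RhoTilde

end DRADP

/-- `ρ̃(π) ≤ ρ(π)` (and each inner expression is at most `ρ(π)`); moreover, if
`Φ` is the identity and the policy is deterministic, `Ũ(π) = {u_π}` and `ρ̃(π) = ρ(π)`. -/
theorem rhoTilde_le_return {S A K : Type*} [Fintype S] [Fintype A] [Fintype K]
    [DecidableEq S] [DecidableEq A]
    (P : S → A → S → ℝ) (r : S → A → ℝ) (α : S → ℝ) (γ : ℝ) (Φ : Matrix S K ℝ)
    (hP : ∀ s a s', 0 ≤ P s a s') (hPsum : ∀ s a, ∑ s', P s a s' = 1)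
    (hα : ∀ s, 0 ≤ α s) (hαsum : ∑ s, α s = 1)
    (hγ0 : 0 ≤ γ) (hγ1 : γ < 1)
    (π : S → A → ℝ) (hπ : isPolicy π) :
    (∀ x : K → ℝ,
      ∑ s, α s * (Φ *ᵥ x) s -
        sSup ((fun u : S × A → ℝ =>
          (∑ w, u w * ((Amat P γ *ᵥ (Φ *ᵥ x)) w - bvec r w)) / (1 - γ)) ''
          Utilde P α γ Φ π) ≤ ret P r α γ π) ∧
    rhoTilde P r α γ Φ π ≤ ret P r α γ π ∧
    (∀ p : S → A,
      Utilde P α γ (1 : Matrix S S ℝ) (detPol p) = {uOcc P α γ (detPol p)} ∧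
      rhoTilde P r α γ (1 : Matrix S S ℝ) (detPol p) = ret P r α γ (detPol p)) := by
  have hM {π' : S → A → ℝ} (hπ' : isPolicy π') := Pmat_mem_rowStochastic hP hPsum hπ'
  have hαΔ : α ∈ stdSimplex ℝ S := ⟨hα, hαsum⟩
  refine ⟨fun x => ?_, rhoTilde_le_ret (hM hπ) hαΔ hγ0 hγ1 hπ Φ, fun p => ?_⟩
  · exact dotProduct_sub_sSup_meanResidual_le_ret (hM hπ) hαΔ hγ0 hγ1 hπ Φ (Φ *ᵥ x)
  · have hMp := hM (isPolicy_detPol p)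
    exact ⟨Utilde_one_detPol hMp hαΔ hγ0 hγ1, rhoTilde_one_detPol hMp hαΔ hγ0 hγ1⟩
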